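/- Let p be an odd prime and let d, e, h, f be positive integers with h − d ≤ f < d < h < e. Then the number of exact (p^d, p^e)-bicyclic pairs of the group M₃(p,d,e,h,f) equals p^{3d+e−2}(p−1)². -/

import Mathlib

/-- Relators for the group `M₁(p,d,e,f) = ⟨a, b ∣ a^(p^e) = b^(p^d) = 1, b⁻¹ab = a^(1+p^f)⟩`,
where `a` is generator `0` and `b` is generator `1`. -/
def M1rels (p d e f : ℕ) : Set (FreeGroup (Fin 2)) :=
  {FreeGroup.of 0 ^ p ^ e, FreeGroup.of 1 ^ p ^ d,
    (FreeGroup.of 1)⁻¹ * FreeGroup.of 0 * FreeGroup.of 1 * (FreeGroup.of 0 ^ (1 + p ^ f))⁻¹}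

/-- The metacyclic group `M₁(p,d,e,f) = ⟨a, b ∣ a^(p^e) = b^(p^d) = 1, b⁻¹ab = a^(1+p^f)⟩`. -/
abbrev M1 (p d e f : ℕ) : Type := PresentedGroup (M1rels p d e f)

/-- The canonical generator `a` of `M₁(p,d,e,f)`. -/
def M1a (p d e f : ℕ) : M1 p d e f := PresentedGroup.of 0

/-- The canonical generator `b` of `M₁(p,d,e,f)`. -/
def M1b (p d e f : ℕ) : M1 p d e f := PresentedGroup.of 1

/-- Relators for the group `M₂(p,d,e,f) = ⟨a, b ∣ a^(p^d) = b^(p^e) = 1, b⁻¹ab = a^(1+p^f)⟩`,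
where `a` is generator `0` and `b` is generator `1`. -/
def M2rels (p d e f : ℕ) : Set (FreeGroup (Fin 2)) :=
  {FreeGroup.of 0 ^ p ^ d, FreeGroup.of 1 ^ p ^ e,
    (FreeGroup.of 1)⁻¹ * FreeGroup.of 0 * FreeGroup.of 1 * (FreeGroup.of 0 ^ (1 + p ^ f))⁻¹}

/-- The metacyclic group `M₂(p,d,e,f) = ⟨a, b ∣ a^(p^d) = b^(p^e) = 1, b⁻¹ab = a^(1+p^f)⟩`. -/
abbrev M2 (p d e f : ℕ) : Type := PresentedGroup (M2rels p d e f)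

/-- The canonical generator `a` of `M₂(p,d,e,f)`. -/
def M2a (p d e f : ℕ) : M2 p d e f := PresentedGroup.of 0

/-- The canonical generator `b` of `M₂(p,d,e,f)`. -/
def M2b (p d e f : ℕ) : M2 p d e f := PresentedGroup.of 1

/-- Relators for the group
`M₃(p,d,e,h,f) = ⟨a, b ∣ a^(p^h) = 1, b^(p^(d+e-h)) = a^(p^d), b⁻¹ab = a^(1+p^f)⟩`,
where `a` is generator `0` and `b` is generator `1`. -/
def M3rels (p d e h f : ℕ) : Set (FreeGroup (Fin 2)) :=
  {FreeGroup.of 0 ^ p ^ h, FreeGroup.of 1 ^ p ^ (d + e - h) * (FreeGroup.of 0 ^ p ^ d)⁻¹,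
    (FreeGroup.of 1)⁻¹ * FreeGroup.of 0 * FreeGroup.of 1 * (FreeGroup.of 0 ^ (1 + p ^ f))⁻¹}

/-- The non-split metacyclic group
`M₃(p,d,e,h,f) = ⟨a, b ∣ a^(p^h) = 1, b^(p^(d+e-h)) = a^(p^d), b⁻¹ab = a^(1+p^f)⟩`. -/
abbrev M3 (p d e h f : ℕ) : Type := PresentedGroup (M3rels p d e h f)

/-- The canonical generator `a` of `M₃(p,d,e,h,f)`. -/
def M3a (p d e h f : ℕ) : M3 p d e h f := PresentedGroup.of 0

/-- The canonical generator `b` of `M₃(p,d,e,h,f)`. -/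
def M3b (p d e h f : ℕ) : M3 p d e h f := PresentedGroup.of 1

/-- `(α, β)` is an exact `(m,n)`-bicyclic pair of `G`: `α` has order `m`, `β` has order `n`,
`⟨α⟩ ∩ ⟨β⟩ = 1`, and `G = ⟨α⟩⟨β⟩`. -/
def IsExactBicyclicPair {G : Type*} [Group G] (m n : ℕ) (α β : G) : Prop :=
  orderOf α = m ∧ orderOf β = n ∧
    Subgroup.zpowers α ⊓ Subgroup.zpowers β = ⊥ ∧
    ∀ g : G, ∃ i j : ℤ, g = α ^ i * β ^ j

/-!
For `β` of order `p ^ e`, the subgroup of order `p` of `⟨β⟩` is the one of `⟨a⟩`. Hence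
`⟨α⟩ ∩ ⟨β⟩ = 1` if and only if `⟨α⟩ ∩ ⟨a⟩ = 1`, and the conditions on `α` and `β` decouple: modulo
`⟨a⟩`, the element `β` is any generator of the cyclic quotient, while `α` has order `p ^ d` and
satisfies `α ^ p ^ d = 1`. The subgroup of `G` lying over the subgroup of order `p ^ d` of `G ⧸ ⟨a⟩`
is a split extension of `⟨c⟩` by `⟨a⟩`, where `c = b ^ p ^ (e - h) * a⁻¹`, and there
`(c ^ i * a ^ j) ^ p ^ d = a ^ (j * p ^ d)`; so the admissible `α` are the products of a generator
of `⟨c⟩` and an element of `⟨a⟩` killed by `p ^ d`.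
-/

section GeomSum

open Finset

theorem geom_sum_range_mul {R : Type*} [CommSemiring R] (v : R) (m n : ℕ) :
    ∑ i ∈ range (m * n), v ^ i = (∑ i ∈ range m, v ^ i) * ∑ i ∈ range n, (v ^ m) ^ i := by
  induction n with
  | zero => simp
  | succ n ih =>
    rw [Nat.mul_succ, sum_range_add, ih, sum_range_succ _ n, mul_add]
    simp only [pow_add, pow_mul, ← mul_sum, mul_comm _ ((v ^ m) ^ n)]

theorem geom_sum_range_modEq {v k : ℕ} (hv : v ≡ 1 [MOD k]) (n : ℕ) :
    ∑ i ∈ range n, v ^ i ≡ n [MOD k] := by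
  simpa using Nat.ModEq.sum (s := range n) fun i _ ↦ hv.pow i

theorem geom_sum_range_pow_modEq {p f v : ℕ} (hv : v ≡ 1 [MOD p ^ (f + 1)]) (m : ℕ) :
    ∑ i ∈ range (p ^ m), v ^ i ≡ p ^ m [MOD p ^ (m + f)] := by
  induction m with
  | zero => simp [Nat.ModEq.refl]
  | succ m ih =>
    have hdvd : p ^ m ∣ ∑ i ∈ range (p ^ m), v ^ i :=
      (ih.dvd_iff (pow_dvd_pow p (m.le_add_right f))).mpr dvd_rfl
    have hlast : ∑ i ∈ range p, (v ^ p ^ m) ^ i ≡ p [MOD p ^ (f + 1)] :=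
      geom_sum_range_modEq (by simpa using hv.pow (p ^ m)) p
    rw [pow_succ p m, geom_sum_range_mul, show m + 1 + f = m + (f + 1) by ring]
    have hmul := hlast.mul_left' (∑ i ∈ range (p ^ m), v ^ i)
    refine (hmul.of_dvd ?_).trans ?_
    · rw [pow_add]
      exact mul_dvd_mul_right hdvd _
    · exact ih.mul_right' p

theorem pow_dvd_geom_sum_range {p v : ℕ} (hv : v ≡ 1 [MOD p]) (m : ℕ) :
    p ^ m ∣ ∑ i ∈ range (p ^ m), v ^ i := by
  have h : ∑ i ∈ range (p ^ m), v ^ i ≡ p ^ m [MOD p ^ (m + 0)] :=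
    geom_sum_range_pow_modEq (by simpa using hv) m
  exact (h.dvd_iff (by simp)).mpr dvd_rfl

theorem pow_pow_modEq_one_of_modEq_one {p f v : ℕ} (hf : f ≠ 0) (hv : v ≡ 1 [MOD p ^ f]) (m : ℕ) :
    v ^ p ^ m ≡ 1 [MOD p ^ (f + m)] := by
  have hsum : ((p ^ m : ℕ) : ℤ) ∣ ∑ i ∈ range (p ^ m), (v : ℤ) ^ i := by
    exact_mod_cast pow_dvd_geom_sum_range (hv.of_dvd (dvd_pow_self p hf)) m
  have h := mul_dvd_mul hsum hv.symm.dvd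
  refine (Nat.modEq_iff_dvd.mpr ?_).symm
  push_cast at h ⊢
  rwa [geom_sum_mul, ← pow_add, add_comm m] at h

end GeomSum

section Group

variable {G : Type*} [Group G]

theorem mul_pow_of_semiconjBy_pow {x y : G} {r : ℕ} (h : SemiconjBy x (y ^ r) y) (n : ℕ) :
    (x * y) ^ n = x ^ n * y ^ ∑ i ∈ Finset.range n, r ^ i := by
  induction n with
  | zero => simp
  | succ n ih =>
    have hn : SemiconjBy x ((y ^ r) ^ ∑ i ∈ Finset.range n, r ^ i)
        (y ^ ∑ i ∈ Finset.range n, r ^ i) := h.pow_right _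
    rw [pow_succ, ih, geom_sum_succ, pow_succ x, pow_add, pow_mul, pow_one]
    simp only [mul_assoc]
    rw [← mul_assoc _ x y, ← hn.eq, mul_assoc]

theorem mul_pow_prime_pow_of_semiconjBy {p f d v : ℕ} {x y : G} (h : SemiconjBy x (y ^ v) y)
    (hv : v ≡ 1 [MOD p ^ (f + 1)]) (hy : y ^ p ^ (d + f) = 1) :
    (x * y) ^ p ^ d = x ^ p ^ d * y ^ p ^ d := by
  have hsum := (geom_sum_range_pow_modEq hv d).of_dvd (orderOf_dvd_of_pow_eq_one hy)
  rw [mul_pow_of_semiconjBy_pow h, pow_eq_pow_iff_modEq.mpr hsum]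

theorem semiconjBy_pow_pow {x y : G} {r : ℕ} (h : SemiconjBy x (y ^ r) y) (s : ℕ) :
    SemiconjBy (x ^ s) (y ^ r ^ s) y := by
  induction s with
  | zero => simp
  | succ s ih =>
    rw [pow_succ' x, pow_succ r, pow_mul]
    exact h.mul_left (ih.pow_right r)

theorem pow_mul_pow_pow_prime_pow_of_semiconjBy {p f d v : ℕ} {x y : G}
    (h : SemiconjBy x (y ^ v) y) (hv : v ≡ 1 [MOD p ^ (f + 1)]) (hx : x ^ p ^ d = 1)
    (hy : y ^ p ^ (d + f) = 1) (i j : ℕ) : (x ^ i * y ^ j) ^ p ^ d = (y ^ j) ^ p ^ d := by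
  have hij : SemiconjBy (x ^ i) ((y ^ j) ^ v ^ i) (y ^ j) :=
    pow_right_comm y _ _ ▸ (semiconjBy_pow_pow h i).pow_right j
  rw [mul_pow_prime_pow_of_semiconjBy hij (by simpa using hv.pow i)
    (by rw [pow_right_comm, hy, one_pow]), pow_right_comm, hx, one_pow, one_mul]

theorem orderOf_eq_prime_pow_iff {p n : ℕ} (hp : p.Prime) {x : G} (hx : x ^ p ^ (n + 1) = 1) :
    orderOf x = p ^ (n + 1) ↔ x ^ p ^ n ≠ 1 := by
  have := Fact.mk hp
  refine ⟨fun h h1 ↦ ?_, fun h ↦ orderOf_eq_prime_pow h hx⟩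
  have := (Nat.pow_dvd_pow_iff_le_right hp.one_lt).mp (h ▸ orderOf_dvd_of_pow_eq_one h1)
  omega

theorem zpowers_pow_of_orderOf_eq_prime_pow {p n i : ℕ} (hp : p.Prime) {x : G}
    (hx : orderOf x = p ^ n) (hi : ¬p ∣ i) : Subgroup.zpowers (x ^ i) = Subgroup.zpowers x := by
  have hcop : i.Coprime (orderOf x) := hx ▸ ((hp.coprime_iff_not_dvd.mpr hi).pow_left n).symm
  exact le_antisymm (Subgroup.zpowers_le.mpr (Subgroup.npow_mem_zpowers x i))
    (Subgroup.zpowers_le.mpr (mem_zpowers_pow_iff.mpr hcop))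

theorem disjoint_zpowers_pow_iff {p n : ℕ} (hp : p.Prime) {y : G}
    (hy : orderOf y = p ^ (n + 1)) (H : Subgroup G) :
    Disjoint H (Subgroup.zpowers (y ^ p ^ n)) ↔ Disjoint H (Subgroup.zpowers y) := by
  refine ⟨fun h ↦ ?_, fun h ↦
    h.mono_right (Subgroup.zpowers_le.mpr (Subgroup.npow_mem_zpowers y _))⟩
  have hfin : IsOfFinOrder y := orderOf_pos_iff.mp (hy ▸ pow_pos hp.pos _)
  rw [Subgroup.disjoint_def] at h ⊢
  intro x hxH hxy
  by_contra hx
  obtain ⟨j, rfl : y ^ j = x⟩ := hfin.mem_powers_iff_mem_zpowers.mpr hxy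
  have hj : j ≠ 0 := by rintro rfl; exact hx (pow_zero y)
  obtain ⟨r, i, hi, rfl⟩ := Nat.exists_eq_pow_mul_and_not_dvd hj p hp.ne_one
  have hr : r ≤ n := by
    by_contra! hlt
    refine hx (orderOf_dvd_iff_pow_eq_one.mp ?_)
    exact hy ▸ (pow_dvd_pow p hlt).mul_right i
  have hord : orderOf (y ^ p ^ r) = p ^ (n + 1 - r) := by
    rw [orderOf_pow_of_dvd (pow_ne_zero r hp.ne_zero) (hy ▸ pow_dvd_pow p (by omega)), hy,
      Nat.pow_div (by omega) hp.pos]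
  have hmem : y ^ p ^ n ∈ Subgroup.zpowers (y ^ (p ^ r * i)) := by
    rw [pow_mul, zpowers_pow_of_orderOf_eq_prime_pow hp hord hi, ← Nat.add_sub_of_le hr, pow_add,
      pow_mul]
    exact Subgroup.npow_mem_zpowers _ _
  have hone := h (Subgroup.zpowers_le.mpr hxH hmem) (Subgroup.mem_zpowers _)
  exact (orderOf_eq_prime_pow_iff hp (hy ▸ pow_orderOf_eq_one y)).mp hy hone

theorem pow_prime_pow_mul_eq_one_iff {p n : ℕ} (hp : p.Prime) {x : G} (hx : orderOf x = p ^ (n + 1))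
    (i : ℕ) : x ^ (p ^ n * i) = 1 ↔ p ∣ i := by
  rw [← orderOf_dvd_iff_pow_eq_one, hx, pow_succ, Nat.mul_dvd_mul_iff_left (pow_pos hp.pos n)]

theorem orderOf_pow_eq_prime_pow_iff {p n : ℕ} (hp : p.Prime) {x : G} (hx : orderOf x = p ^ (n + 1))
    (i : ℕ) : orderOf (x ^ i) = p ^ (n + 1) ↔ ¬p ∣ i := by
  rw [orderOf_eq_prime_pow_iff hp, ← pow_mul, mul_comm, Ne, pow_prime_pow_mul_eq_one_iff hp hx]
  rw [pow_right_comm, ← hx, pow_orderOf_eq_one, one_pow]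

theorem orderOf_eq_and_disjoint_iff (N : Subgroup G) [N.Normal] (α : G) (m : ℕ) :
    (orderOf α = m ∧ Disjoint (Subgroup.zpowers α) N) ↔ orderOf (α : G ⧸ N) = m ∧ α ^ m = 1 := by
  rw [Subgroup.disjoint_def]
  constructor
  · rintro ⟨rfl, hdisj⟩
    refine ⟨dvd_antisymm (orderOf_map_dvd (QuotientGroup.mk' N) α) ?_, pow_orderOf_eq_one α⟩
    refine orderOf_dvd_of_pow_eq_one (hdisj (Subgroup.npow_mem_zpowers α _) ?_)
    rw [← QuotientGroup.eq_one_iff, QuotientGroup.mk_pow, pow_orderOf_eq_one]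
  · rintro ⟨rfl, hpow⟩
    refine ⟨dvd_antisymm (orderOf_dvd_of_pow_eq_one hpow)
      (orderOf_map_dvd (QuotientGroup.mk' N) α), ?_⟩
    rintro _ ⟨j, rfl⟩ hj
    rw [← QuotientGroup.eq_one_iff, QuotientGroup.mk_zpow, ← orderOf_dvd_iff_zpow_eq_one] at hj
    obtain ⟨t, rfl⟩ := hj
    simp [zpow_mul, hpow]

theorem isExactBicyclicPair_iff [Finite G] {m n : ℕ} (hG : Nat.card G = m * n) {α β : G} :
    IsExactBicyclicPair m n α β ↔ orderOf α = m ∧ orderOf β = n ∧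
      Disjoint (Subgroup.zpowers α) (Subgroup.zpowers β) := by
  rw [IsExactBicyclicPair, disjoint_iff]
  refine and_congr_right fun hα ↦ and_congr_right fun hβ ↦ and_iff_left_of_imp fun hdisj g ↦ ?_
  have hcompl : (Subgroup.zpowers α).IsComplement' (Subgroup.zpowers β) :=
    Subgroup.isComplement'_of_card_mul_and_disjoint
      (by rw [Nat.card_zpowers, Nat.card_zpowers, hα, hβ, hG]) (disjoint_iff.mpr hdisj)
  obtain ⟨⟨⟨_, i, rfl⟩, ⟨_, j, rfl⟩⟩, hg⟩ := hcompl.2 g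
  exact ⟨i, j, hg.symm⟩

open scoped Pointwise in
theorem ncard_mul_of_disjoint {H K : Subgroup G} (hHK : Disjoint H K) {s t : Set G}
    (hs : s ⊆ H) (ht : t ⊆ K) : (s * t).ncard = s.ncard * t.ncard := by
  rw [← Set.image_mul_prod, ← Set.ncard_prod]
  refine Set.InjOn.ncard_image fun x hx y hy hxy ↦ ?_
  have := @Subgroup.mul_injective_of_disjoint _ _ _ _ hHK
    (⟨x.1, hs hx.1⟩, ⟨x.2, ht hx.2⟩) (⟨y.1, hs hy.1⟩, ⟨y.2, ht hy.2⟩) hxy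
  simpa [Prod.ext_iff] using this

theorem ncard_orderOf_eq_inter_zpowers {c : G} (hc : IsOfFinOrder c) {m : ℕ}
    (hm : m ∣ orderOf c) :
    ({x | orderOf x = m} ∩ Subgroup.zpowers c : Set G).ncard = m.totient := by
  classical
  have := @Fintype.ofFinite (Subgroup.zpowers c) hc.finite_zpowers
  have hcard := IsCyclic.card_orderOf_eq_totient (α := Subgroup.zpowers c) (d := m)
    (by rwa [← Nat.card_eq_fintype_card, Nat.card_zpowers])
  rw [← hcard, ← Set.ncard_coe_finset]
  simpa using (Set.ncard_subtype (· ∈ Subgroup.zpowers c) {x | orderOf x = m}).symm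

theorem ncard_pow_eq_one_inter_zpowers {c : G} (hc : IsOfFinOrder c) {m : ℕ}
    (hm : m ∣ orderOf c) : ({x | x ^ m = 1} ∩ Subgroup.zpowers c : Set G).ncard = m := by
  have : Finite (Subgroup.zpowers c) := hc.finite_zpowers
  let := IsCyclic.commGroup (α := Subgroup.zpowers c)
  have hcard := IsCyclic.card_powMonoidHom_ker (Subgroup.zpowers c) m
  rw [Nat.card_zpowers, Nat.gcd_eq_right hm, ← SetLike.coe_sort_coe, Nat.card_coe_set_eq] at hcard
  refine Eq.trans ?_ hcard
  refine (Set.ncard_subtype (· ∈ Subgroup.zpowers c) {x | x ^ m = 1}).symm.trans ?_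
  congr 1
  ext
  simp [MonoidHom.mem_ker, Subtype.ext_iff]

theorem ncard_preimage_quotientMk (N : Subgroup G) (s : Set (G ⧸ N)) :
    ((↑) ⁻¹' s : Set G).ncard = Nat.card N * s.ncard := by
  rw [← Nat.card_coe_set_eq, Nat.card_congr (QuotientGroup.preimageMkEquivSubgroupProdSet N s),
    Nat.card_prod, Nat.card_coe_set_eq]

end Group

section CyclicExtension

universe u

theorem normal_of_le_center {G : Type*} [Group G] {H : Subgroup G} (hH : H ≤ Subgroup.center G) :
    H.Normal := by
  refine ⟨fun x hx g ↦ ?_⟩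
  rwa [Subgroup.mem_center_iff.mp (hH hx) g, mul_inv_cancel_right]

theorem semiconjBy_pow_mulAut {N G : Type*} [Group N] [Group G] {σ : MulAut N} {ι : N →* G} {t : G}
    (ht : ∀ x, SemiconjBy t (ι (σ x)) (ι x)) (n : ℕ) (x : N) :
    SemiconjBy (t ^ n) (ι ((σ ^ n) x)) (ι x) := by
  induction n generalizing x with
  | zero => simp
  | succ n ih => exact pow_succ' t n ▸ (ht x).mul_left (ih (σ x))

theorem commute_map_inv_mul_pow {N G : Type*} [Group N] [Group G] {σ : MulAut N} {ι : N →* G}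
    {t : G} (ht : ∀ x, SemiconjBy t (ι (σ x)) (ι x)) {n : ℕ} {z : N}
    (hσ : ∀ x, (σ ^ n) x = z⁻¹ * x * z) (x : N) : Commute (ι z⁻¹ * t ^ n) (ι x) := by
  have hpow := semiconjBy_pow_mulAut ht n (z * x * z⁻¹)
  have hinv : SemiconjBy (ι z⁻¹) (ι (z * x * z⁻¹)) (ι x) := by
    rw [SemiconjBy, ← map_mul, ← map_mul]
    group
  refine hinv.mul_left ?_
  rwa [hσ, show z⁻¹ * (z * x * z⁻¹) * z = x by group] at hpow

/- Hölder's extension theorem. In `N ⋊ ℤ`, where the generator `t` of `ℤ` satisfies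
`t⁻¹ * x * t = σ x`, the element `w = z⁻¹ * t ^ n` is central and `⟨w⟩` meets `N` trivially, so
`E = (N ⋊ ℤ) ⧸ ⟨w⟩` works. -/
theorem exists_cyclic_extension {N : Type u} [Group N] {n : ℕ} (hn : n ≠ 0) {σ : MulAut N} {z : N}
    (hσ : ∀ x, (σ ^ n) x = z⁻¹ * x * z) (hz : σ z = z) :
    ∃ (E : Type u) (_ : Group E) (ι : N →* E) (b : E), Function.Injective ι ∧
      b ^ n = ι z ∧ ∀ x, SemiconjBy b (ι (σ x)) (ι x) := by
  obtain ⟨φ, hφ⟩ : ∃ φ : Multiplicative ℤ →* MulAut N, φ (Multiplicative.ofAdd 1) = σ⁻¹ :=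
    ⟨zpowersHom (MulAut N) σ⁻¹, by simp⟩
  let inl : N →* N ⋊[φ] Multiplicative ℤ := SemidirectProduct.inl
  let t : N ⋊[φ] Multiplicative ℤ := SemidirectProduct.inr (Multiplicative.ofAdd 1)
  let w := inl z⁻¹ * t ^ n
  have ht (x : N) : SemiconjBy t (inl (σ x)) (inl x) := by
    have h := SemidirectProduct.inl_aut (φ := φ) (Multiplicative.ofAdd 1) (σ x)
    rw [map_inv SemidirectProduct.inr, eq_mul_inv_iff_mul_eq, hφ, MulAut.inv_apply_self] at h
    exact h.symm
  have htw : Commute t w :=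
    .mul_right (by simpa only [Commute, map_inv, hz] using ht z⁻¹) (.pow_right rfl n)
  have hw : w ∈ Subgroup.center _ := by
    refine Subgroup.mem_center_iff.mpr fun g ↦ ?_
    have hright : SemidirectProduct.inr g.right = t ^ g.right.toAdd := by
      rw [← map_zpow, ← ofAdd_zsmul, smul_eq_mul, mul_one, ofAdd_toAdd]
    rw [← SemidirectProduct.inl_left_mul_inr_right g, hright]
    exact (commute_map_inv_mul_pow ht hσ g.left).symm.mul_left (htw.zpow_left _)
  have := normal_of_le_center (Subgroup.zpowers_le.mpr hw)
  let π := QuotientGroup.mk' (Subgroup.zpowers w)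
  refine ⟨_, inferInstance, π.comp inl, π t, ?_, ?_, fun x ↦ (ht x).map π⟩
  · refine (injective_iff_map_eq_one _).mpr fun x hx ↦ ?_
    obtain ⟨j, hj : w ^ j = inl x⟩ := (QuotientGroup.eq_one_iff _).mp hx
    have hj0 : j = 0 := by
      simpa [w, inl, t, hn, -SemidirectProduct.rightHom_eq_right] using
        congrArg (fun g ↦ (SemidirectProduct.rightHom g).toAdd) hj
    exact SemidirectProduct.inl_injective (by simpa [hj0] using hj.symm)
  · exact QuotientGroup.eq.mpr ⟨-1, by simp [w]⟩

end CyclicExtension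

/-- The relators of the metacyclic presentation
`⟨a, b ∣ a ^ m = 1, b ^ n = a ^ t, b⁻¹ * a * b = a ^ r⟩`, with `a` the generator `0` and `b` the
generator `1`. -/
def metacyclicRels (m n t r : ℕ) : Set (FreeGroup (Fin 2)) :=
  {FreeGroup.of 0 ^ m, FreeGroup.of 1 ^ n * (FreeGroup.of 0 ^ t)⁻¹,
    (FreeGroup.of 1)⁻¹ * FreeGroup.of 0 * FreeGroup.of 1 * (FreeGroup.of 0 ^ r)⁻¹}

/-- `a` and `b` generate `G`, satisfy the relations of `metacyclicRels m n t r`, and these relations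
do not collapse: `⟨a⟩` has order exactly `m`, and the image of `b` modulo `⟨a⟩` has order exactly
`n`. The relation `b⁻¹ * a * b = a ^ r` is recorded as `SemiconjBy b (a ^ r) a`. -/
structure IsMetacyclicGenPair {G : Type*} [Group G] (m n t r : ℕ) (a b : G) : Prop where
  orderOf_left : orderOf a = m
  pow_right : b ^ n = a ^ t
  semiconjBy : SemiconjBy b (a ^ r) a
  dvd_of_pow_mem : ∀ i : ℕ, b ^ i ∈ Subgroup.zpowers a → n ∣ i
  closure_eq_top : Subgroup.closure {a, b} = ⊤

section Metacyclic

variable {m n t r : ℕ}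

theorem inv_mul_mul_mul_inv_eq_one_iff {G : Type*} [Group G] {x y z : G} :
    x⁻¹ * z * x * y⁻¹ = 1 ↔ SemiconjBy x y z := by
  rw [mul_inv_eq_one, mul_assoc, inv_mul_eq_iff_eq_mul, SemiconjBy, eq_comm]

theorem lift_eq_one_of_mem_metacyclicRels {G : Type*} [Group G] {f : Fin 2 → G} (ha : f 0 ^ m = 1)
    (hb : f 1 ^ n = f 0 ^ t) (hab : SemiconjBy (f 1) (f 0 ^ r) (f 0)) :
    ∀ w ∈ metacyclicRels m n t r, FreeGroup.lift f w = 1 := by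
  rintro w (rfl | rfl | rfl)
  · simpa using ha
  · simpa [mul_inv_eq_one] using hb
  · simpa using inv_mul_mul_mul_inv_eq_one_iff.mpr hab

theorem exists_metacyclic_realization (hn : n ≠ 0) (hr : r ^ n ≡ 1 [MOD m])
    (ht : t * r ≡ t [MOD m]) : ∃ (E : Type) (_ : Group E) (a b : E),
      orderOf a = m ∧ b ^ n = a ^ t ∧ SemiconjBy b (a ^ r) a := by
  have hrn : (r : ZMod m) ^ n = 1 := mod_cast (ZMod.natCast_eq_natCast_iff _ _ m).mpr hr
  let σ : MulAut (Multiplicative (ZMod m)) :=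
    (MulAutMultiplicative (ZMod m)).symm (AddAut.mulLeft (Units.ofPowEqOne (r : ZMod m) n hrn hn))
  have hσn : σ ^ n = 1 := by simp only [σ, ← map_pow, Units.pow_ofPowEqOne, map_one]
  have hσ (x : Multiplicative (ZMod m)) : σ x = x ^ r :=
    congrArg Multiplicative.ofAdd (nsmul_eq_mul r x.toAdd).symm
  let a : Multiplicative (ZMod m) := Multiplicative.ofAdd 1
  have ha : orderOf a = m := by simp [a, ZMod.addOrderOf_one]
  have hσa : σ (a ^ t) = a ^ t := by
    rw [hσ, ← pow_mul, pow_eq_pow_iff_modEq, ha]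
    exact ht
  obtain ⟨E, _, ι, b, hι, hb, hab⟩ :=
    exists_cyclic_extension hn (z := a ^ t) (fun x ↦ by simp [hσn]) hσa
  exact ⟨E, _, ι a, b, orderOf_injective ι hι a ▸ ha, map_pow ι a t ▸ hb,
    by simpa only [hσ, map_pow] using hab a⟩

theorem isMetacyclicGenPair_presentedGroup (hn : n ≠ 0) (hr : r ^ n ≡ 1 [MOD m])
    (ht : t * r ≡ t [MOD m]) :
    IsMetacyclicGenPair (G := PresentedGroup (metacyclicRels m n t r)) m n t r
      (PresentedGroup.of 0) (PresentedGroup.of 1) where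
  orderOf_left := by
    obtain ⟨E, _, a, b, ha, hb, hab⟩ := exists_metacyclic_realization hn hr ht
    let φ := PresentedGroup.toGroup (f := ![a, b])
      (lift_eq_one_of_mem_metacyclicRels (ha ▸ pow_orderOf_eq_one a) hb hab)
    refine dvd_antisymm (orderOf_dvd_of_pow_eq_one (PresentedGroup.one_of_mem (.inl rfl))) ?_
    simpa [φ, ha] using orderOf_map_dvd φ (PresentedGroup.of 0)
  pow_right := PresentedGroup.mk_eq_mk_of_mul_inv_mem (.inr (.inl rfl))
  semiconjBy := inv_mul_mul_mul_inv_eq_one_iff.mp (PresentedGroup.one_of_mem (.inr (.inr rfl)))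
  dvd_of_pow_mem i hi := by
    let φ : PresentedGroup (metacyclicRels m n t r) →* Multiplicative (ZMod n) :=
      PresentedGroup.toGroup (f := ![1, Multiplicative.ofAdd 1])
        (lift_eq_one_of_mem_metacyclicRels (by simp) (by simp [← ofAdd_nsmul]) (by simp))
    obtain ⟨j, hj⟩ := hi
    have h : Multiplicative.ofAdd (1 : ZMod n) ^ i = 1 := by simpa [φ] using (congrArg φ hj).symm
    simpa [ZMod.natCast_eq_zero_iff] using congrArg Multiplicative.toAdd h
  closure_eq_top := by
    rw [← PresentedGroup.closure_range_of]
    congr 1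
    ext
    simp [Fin.exists_fin_two, eq_comm]

end Metacyclic

namespace IsMetacyclicGenPair

variable {G : Type*} [Group G] {m n t r : ℕ} {a b : G}

theorem normal_zpowers (H : IsMetacyclicGenPair m n t r a b) (hm : m ≠ 0) :
    (Subgroup.zpowers a).Normal := by
  have hfin : IsOfFinOrder a := orderOf_pos_iff.mp (H.orderOf_left ▸ hm.bot_lt)
  have : Finite (Subgroup.zpowers a : Set G) := hfin.finite_zpowers
  have ha : a ∈ Subgroup.normalizer (Subgroup.zpowers a : Set G) :=
    Subgroup.le_normalizer (Subgroup.mem_zpowers a)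
  have hb : b⁻¹ ∈ Subgroup.normalizer (Subgroup.zpowers a : Set G) := by
    refine Subgroup.mem_normalizer_fintype ?_
    rintro _ ⟨j, rfl⟩
    refine ⟨r * j, ?_⟩
    have hj := (H.semiconjBy.zpow_right j).eq
    rw [inv_inv, mul_assoc, ← hj, inv_mul_cancel_left]
    exact (zpow_mul a r j).trans (by rw [zpow_natCast])
  rw [← Subgroup.normalizer_eq_top_iff, eq_top_iff, ← H.closure_eq_top, Subgroup.closure_le,
    Set.pair_subset_iff]
  exact ⟨ha, inv_mem_iff.mp hb⟩

theorem zpowers_sup_zpowers (H : IsMetacyclicGenPair m n t r a b) :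
    Subgroup.zpowers b ⊔ Subgroup.zpowers a = ⊤ := by
  rw [eq_top_iff, ← H.closure_eq_top, Subgroup.closure_le, Set.pair_subset_iff]
  exact ⟨Subgroup.mem_sup_right (Subgroup.mem_zpowers a),
    Subgroup.mem_sup_left (Subgroup.mem_zpowers b)⟩

theorem orderOf_mk_right (H : IsMetacyclicGenPair m n t r a b) [(Subgroup.zpowers a).Normal] :
    orderOf (b : G ⧸ Subgroup.zpowers a) = n := by
  refine dvd_antisymm (orderOf_dvd_of_pow_eq_one ?_) (H.dvd_of_pow_mem _ ?_)
  · rw [← QuotientGroup.mk_pow, QuotientGroup.eq_one_iff, H.pow_right]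
    exact Subgroup.npow_mem_zpowers a t
  · rw [← QuotientGroup.eq_one_iff, QuotientGroup.mk_pow, pow_orderOf_eq_one]

theorem zpowers_mk_right (H : IsMetacyclicGenPair m n t r a b) [(Subgroup.zpowers a).Normal] :
    Subgroup.zpowers (b : G ⧸ Subgroup.zpowers a) = ⊤ := by
  have h := congrArg (Subgroup.map (QuotientGroup.mk' (Subgroup.zpowers a))) H.zpowers_sup_zpowers
  rwa [Subgroup.map_sup, QuotientGroup.map_mk'_self, sup_bot_eq, MonoidHom.map_zpowers,
    Subgroup.map_top_of_surjective _ (QuotientGroup.mk'_surjective _)] at h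

theorem card_eq (H : IsMetacyclicGenPair m n t r a b) (hm : m ≠ 0) : Nat.card G = n * m := by
  have := H.normal_zpowers hm
  rw [Subgroup.card_eq_card_quotient_mul_card_subgroup (Subgroup.zpowers a), Nat.card_zpowers,
    H.orderOf_left, ← Subgroup.card_top (G := G ⧸ Subgroup.zpowers a), ← H.zpowers_mk_right,
    Nat.card_zpowers, H.orderOf_mk_right]

open scoped Pointwise in
theorem exists_pow_mul [Finite G] (H : IsMetacyclicGenPair m n t r a b)
    [(Subgroup.zpowers a).Normal] (g : G) : ∃ i j : ℕ, g = b ^ i * a ^ j := by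
  have hg : g ∈ (Subgroup.zpowers b * Subgroup.zpowers a : Set G) := by
    rw [← Subgroup.mul_normal, H.zpowers_sup_zpowers]
    trivial
  obtain ⟨x, hx, y, hy, rfl⟩ := hg
  obtain ⟨i, rfl⟩ := mem_powers_iff_mem_zpowers.mpr hx
  obtain ⟨j, rfl⟩ := mem_powers_iff_mem_zpowers.mpr hy
  exact ⟨i, j, rfl⟩

theorem pow_mul_pow_pow (H : IsMetacyclicGenPair m n t r a b) (i j l : ℕ) :
    (b ^ i * a ^ j) ^ l = b ^ (i * l) * a ^ (j * ∑ s ∈ Finset.range l, (r ^ i) ^ s) := by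
  have h := (semiconjBy_pow_pow H.semiconjBy i).pow_right j
  rw [← pow_mul, mul_comm, pow_mul] at h
  rw [mul_pow_of_semiconjBy_pow h, pow_mul, pow_mul]

variable {p d h k : ℕ}

theorem pow_mul_pow_pow_prime_pow (H : IsMetacyclicGenPair (p ^ h) (p ^ (d + k)) (p ^ d) r a b)
    (hr : r ≡ 1 [MOD p]) {g : ℕ} (hdg : d ≤ g) (hhg : h ≤ k + g) (i j : ℕ) :
    (b ^ i * a ^ j) ^ p ^ (k + g) = a ^ (p ^ g * i) := by
  have hsum : p ^ h ∣ ∑ s ∈ Finset.range (p ^ (k + g)), (r ^ i) ^ s :=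
    (pow_dvd_pow p hhg).trans (pow_dvd_geom_sum_range (by simpa using hr.pow i) _)
  have ha : a ^ (j * ∑ s ∈ Finset.range (p ^ (k + g)), (r ^ i) ^ s) = 1 :=
    orderOf_dvd_iff_pow_eq_one.mp (H.orderOf_left ▸ hsum.mul_left j)
  obtain ⟨l, rfl⟩ := Nat.exists_eq_add_of_le hdg
  rw [H.pow_mul_pow_pow, ha, mul_one,
    show i * p ^ (k + (d + l)) = p ^ (d + k) * (p ^ l * i) by ring, pow_mul, H.pow_right, ← pow_mul]
  ring_nf

theorem orderOf_eq_iff [Finite G] [(Subgroup.zpowers a).Normal]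
    (H : IsMetacyclicGenPair (p ^ h) (p ^ (d + k)) (p ^ d) r a b) (hp : p.Prime)
    (hr : r ≡ 1 [MOD p]) (hdh : d < h) (hk : 0 < k) (β : G) :
    orderOf β = p ^ (h + k) ↔ orderOf (β : G ⧸ Subgroup.zpowers a) = p ^ (d + k) := by
  obtain ⟨k, rfl⟩ := Nat.exists_eq_add_one.mpr hk
  obtain ⟨h, rfl⟩ := Nat.exists_eq_add_one.mpr (d.zero_le.trans_lt hdh)
  obtain ⟨i, j, rfl⟩ := H.exists_pow_mul β
  have hmk : ((b ^ i * a ^ j : G) : G ⧸ Subgroup.zpowers a) = (b : G ⧸ Subgroup.zpowers a) ^ i :=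
    QuotientGroup.mk_mul_of_mem _ (Subgroup.npow_mem_zpowers a j)
  have hpow : (b ^ i * a ^ j) ^ p ^ (h + 1 + k) = a ^ (p ^ h * i) := by
    rw [← H.pow_mul_pow_pow_prime_pow hr (g := h) (by omega) (by omega) i j]
    ring_nf
  have hpow' : (b ^ i * a ^ j) ^ p ^ (h + 1 + k + 1) = 1 := by
    rw [pow_succ, pow_mul, hpow, ← pow_mul, mul_right_comm, ← pow_succ, pow_mul, ← H.orderOf_left,
      pow_orderOf_eq_one, one_pow]
  rw [hmk, ← add_assoc, ← add_assoc,
    orderOf_pow_eq_prime_pow_iff (n := d + k) hp H.orderOf_mk_right,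
    orderOf_eq_prime_pow_iff hp hpow', hpow, Ne, pow_prime_pow_mul_eq_one_iff hp H.orderOf_left]

theorem disjoint_zpowers_iff [Finite G] [(Subgroup.zpowers a).Normal]
    (H : IsMetacyclicGenPair (p ^ h) (p ^ (d + k)) (p ^ d) r a b) (hp : p.Prime)
    (hr : r ≡ 1 [MOD p]) (hdh : d < h) (hk : 0 < k) {β : G} (hβ : orderOf β = p ^ (h + k))
    (K : Subgroup G) :
    Disjoint K (Subgroup.zpowers β) ↔ Disjoint K (Subgroup.zpowers a) := by
  obtain ⟨h, rfl⟩ := Nat.exists_eq_add_one.mpr (d.zero_le.trans_lt hdh)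
  obtain ⟨i, j, rfl⟩ := H.exists_pow_mul β
  have hpow := H.pow_mul_pow_pow_prime_pow hr (g := h) (by omega) (by omega) i j
  rw [add_right_comm, add_comm h] at hβ
  have hi : ¬p ∣ i := by
    rw [← pow_prime_pow_mul_eq_one_iff hp H.orderOf_left, ← hpow]
    exact (orderOf_eq_prime_pow_iff hp (hβ ▸ pow_orderOf_eq_one _)).mp hβ
  have hz : orderOf (a ^ p ^ h) = p ^ 1 := by
    rw [orderOf_pow_of_dvd (pow_ne_zero h hp.ne_zero)] <;> rw [H.orderOf_left]
    · simp [pow_succ, hp.pos]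
    · exact pow_dvd_pow p h.le_succ
  rw [← disjoint_zpowers_pow_iff hp hβ, hpow, pow_mul, zpowers_pow_of_orderOf_eq_prime_pow hp hz hi,
    disjoint_zpowers_pow_iff hp H.orderOf_left]

theorem isExactBicyclicPair_iff [Finite G] [(Subgroup.zpowers a).Normal]
    (H : IsMetacyclicGenPair (p ^ h) (p ^ (d + k)) (p ^ d) r a b) (hp : p.Prime)
    (hr : r ≡ 1 [MOD p]) (hdh : d < h) (hk : 0 < k) (α β : G) :
    IsExactBicyclicPair (p ^ d) (p ^ (h + k)) α β ↔
      (orderOf (α : G ⧸ Subgroup.zpowers a) = p ^ d ∧ α ^ p ^ d = 1) ∧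
        orderOf (β : G ⧸ Subgroup.zpowers a) = p ^ (d + k) := by
  have hcard : Nat.card G = p ^ d * p ^ (h + k) := by
    rw [H.card_eq (pow_ne_zero h hp.ne_zero)]
    ring
  rw [_root_.isExactBicyclicPair_iff hcard, ← orderOf_eq_and_disjoint_iff,
    ← H.orderOf_eq_iff hp hr hdh hk, and_assoc, and_comm (a := Disjoint _ _)]
  exact and_congr_right fun _ ↦ and_congr_right fun hβ ↦ H.disjoint_zpowers_iff hp hr hdh hk hβ _

theorem mk_mem_zpowers_of_orderOf_eq [Finite G] [(Subgroup.zpowers a).Normal]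
    (H : IsMetacyclicGenPair (p ^ h) (p ^ (d + k)) (p ^ d) r a b) (hp : p.Prime) {α : G}
    (hα : orderOf (α : G ⧸ Subgroup.zpowers a) = p ^ d) :
    (α : G ⧸ Subgroup.zpowers a) ∈ Subgroup.zpowers ((b : G ⧸ Subgroup.zpowers a) ^ p ^ k) := by
  have hmem : (α : G ⧸ Subgroup.zpowers a) ∈ Subgroup.zpowers (b : G ⧸ Subgroup.zpowers a) :=
    H.zpowers_mk_right ▸ Subgroup.mem_top _
  obtain ⟨i, hi : (b : G ⧸ Subgroup.zpowers a) ^ i = α⟩ := mem_powers_iff_mem_zpowers.mpr hmem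
  have hdvd : p ^ (d + k) ∣ i * p ^ d := by
    rw [← H.orderOf_mk_right, orderOf_dvd_iff_pow_eq_one, pow_mul, hi, ← hα, pow_orderOf_eq_one]
  rw [pow_add, mul_comm] at hdvd
  obtain ⟨s, rfl⟩ := Nat.dvd_of_mul_dvd_mul_right (pow_pos hp.pos d) hdvd
  rw [← hi, pow_mul]
  exact Subgroup.npow_mem_zpowers _ s

theorem exists_mk_eq_and_pow_eq_one_and_semiconjBy [(Subgroup.zpowers a).Normal] {f : ℕ}
    (H : IsMetacyclicGenPair (p ^ h) (p ^ (d + k)) (p ^ d) r a b)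
    (hr : r ^ p ^ k ≡ 1 [MOD p ^ (f + 1)]) (ha : a ^ p ^ (d + f) = 1) :
    ∃ c : G, (c : G ⧸ Subgroup.zpowers a) = (b : G ⧸ Subgroup.zpowers a) ^ p ^ k ∧
      c ^ p ^ d = 1 ∧ SemiconjBy c (a ^ r ^ p ^ k) a := by
  have hsemi : SemiconjBy (b ^ p ^ k) (a ^ r ^ p ^ k) a := semiconjBy_pow_pow H.semiconjBy _
  refine ⟨b ^ p ^ k * a⁻¹, QuotientGroup.mk_mul_of_mem _ (inv_mem (Subgroup.mem_zpowers a)), ?_,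
    hsemi.mul_left ((Commute.refl a).inv_left.pow_right _)⟩
  rw [mul_pow_prime_pow_of_semiconjBy (by simpa using hsemi.inv_right) hr (by simpa using ha),
    ← pow_mul, ← pow_add, add_comm, H.pow_right, inv_pow, mul_inv_cancel]

open scoped Pointwise in
theorem setOf_orderOf_mk_eq_and_pow_eq_one [Finite G] [(Subgroup.zpowers a).Normal] {f v : ℕ}
    (H : IsMetacyclicGenPair (p ^ h) (p ^ (d + k)) (p ^ d) r a b) (hp : p.Prime)
    (hv : v ≡ 1 [MOD p ^ (f + 1)]) (ha : a ^ p ^ (d + f) = 1) {c : G}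
    (hmk : (c : G ⧸ Subgroup.zpowers a) = (b : G ⧸ Subgroup.zpowers a) ^ p ^ k)
    (hc : c ^ p ^ d = 1) (hca : SemiconjBy c (a ^ v) a)
    (hdisj : Disjoint (Subgroup.zpowers c) (Subgroup.zpowers a)) :
    {α : G | orderOf (α : G ⧸ Subgroup.zpowers a) = p ^ d ∧ α ^ p ^ d = 1} =
      ({x | orderOf x = p ^ d} ∩ Subgroup.zpowers c) *
        ({y | y ^ p ^ d = 1} ∩ Subgroup.zpowers a) := by
  have hmul := pow_mul_pow_pow_prime_pow_of_semiconjBy hca hv hc ha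
  have hiff (s : ℕ) :
      orderOf (c ^ s) = p ^ d ↔ orderOf ((c ^ s : G) : G ⧸ Subgroup.zpowers a) = p ^ d := by
    have hs : Disjoint (Subgroup.zpowers (c ^ s)) (Subgroup.zpowers a) :=
      hdisj.mono_left (Subgroup.zpowers_le.mpr (Subgroup.npow_mem_zpowers c s))
    have h1 : (c ^ s) ^ p ^ d = 1 := by rw [pow_right_comm, hc, one_pow]
    simpa [hs, h1] using orderOf_eq_and_disjoint_iff (Subgroup.zpowers a) (c ^ s) (p ^ d)
  ext α
  constructor
  · rintro ⟨hord, hpow⟩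
    obtain ⟨s, hs : (c : G ⧸ Subgroup.zpowers a) ^ s = α⟩ :=
      mem_powers_iff_mem_zpowers.mpr (hmk ▸ H.mk_mem_zpowers_of_orderOf_eq hp hord)
    obtain ⟨j, hj : a ^ j = (c ^ s)⁻¹ * α⟩ :=
      mem_powers_iff_mem_zpowers.mpr (QuotientGroup.eq.mp hs)
    obtain rfl : c ^ s * a ^ j = α := by rw [hj, mul_inv_cancel_left]
    refine Set.mul_mem_mul ⟨(hiff s).mpr ?_, Subgroup.npow_mem_zpowers c s⟩
      ⟨(hmul s j).symm.trans hpow, Subgroup.npow_mem_zpowers a j⟩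
    rwa [QuotientGroup.mk_pow, hs]
  · rintro ⟨x, ⟨hx, hxc⟩, y, ⟨hy, hya⟩, rfl⟩
    obtain ⟨s, rfl⟩ := mem_powers_iff_mem_zpowers.mpr hxc
    obtain ⟨j, rfl⟩ := mem_powers_iff_mem_zpowers.mpr hya
    refine ⟨?_, (hmul s j).trans hy⟩
    exact (QuotientGroup.mk_mul_of_mem (c ^ s) hya).symm ▸ (hiff s).mp hx

theorem ncard_orderOf_mk_eq_and_pow_eq_one [Finite G] [(Subgroup.zpowers a).Normal] {f : ℕ}
    (H : IsMetacyclicGenPair (p ^ h) (p ^ (d + k)) (p ^ d) r a b) (hp : p.Prime)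
    (hr : r ^ p ^ k ≡ 1 [MOD p ^ (f + 1)]) (hdh : d ≤ h) (hhf : h ≤ d + f) :
    {α : G | orderOf (α : G ⧸ Subgroup.zpowers a) = p ^ d ∧ α ^ p ^ d = 1}.ncard =
      (p ^ d).totient * p ^ d := by
  have ha : a ^ p ^ (d + f) = 1 :=
    orderOf_dvd_iff_pow_eq_one.mp (H.orderOf_left ▸ pow_dvd_pow p hhf)
  obtain ⟨c, hmk, hc, hca⟩ := H.exists_mk_eq_and_pow_eq_one_and_semiconjBy hr ha
  have hord_mk : orderOf (c : G ⧸ Subgroup.zpowers a) = p ^ d := by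
    rw [hmk, orderOf_pow_of_dvd (pow_ne_zero k hp.ne_zero)] <;> rw [H.orderOf_mk_right, pow_add]
    · exact Nat.mul_div_cancel _ (pow_pos hp.pos k)
    · exact dvd_mul_left _ _
  obtain ⟨hord, hdisj⟩ := (orderOf_eq_and_disjoint_iff _ c _).mpr ⟨hord_mk, hc⟩
  rw [H.setOf_orderOf_mk_eq_and_pow_eq_one hp hr ha hmk hc hca hdisj,
    ncard_mul_of_disjoint hdisj Set.inter_subset_right Set.inter_subset_right,
    ncard_orderOf_eq_inter_zpowers (isOfFinOrder_of_finite c) hord.symm.dvd,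
    ncard_pow_eq_one_inter_zpowers (isOfFinOrder_of_finite a)
      (H.orderOf_left ▸ pow_dvd_pow p hdh)]

theorem ncard_orderOf_mk_eq [Finite G] [(Subgroup.zpowers a).Normal]
    (H : IsMetacyclicGenPair m n t r a b) :
    {β : G | orderOf (β : G ⧸ Subgroup.zpowers a) = n}.ncard = m * n.totient := by
  have htot := ncard_orderOf_eq_inter_zpowers
    (isOfFinOrder_of_finite (b : G ⧸ Subgroup.zpowers a)) H.orderOf_mk_right.symm.dvd
  rw [H.zpowers_mk_right, Subgroup.coe_top, Set.inter_univ] at htot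
  rw [← htot, ← H.orderOf_left, ← Nat.card_zpowers]
  exact ncard_preimage_quotientMk (Subgroup.zpowers a) {q | orderOf q = n}

theorem card_isExactBicyclicPair {f : ℕ}
    (H : IsMetacyclicGenPair (p ^ h) (p ^ (d + k)) (p ^ d) r a b) (hp : p.Prime)
    (hf : f ≠ 0) (hr : r ≡ 1 [MOD p ^ f]) (hdh : d < h) (hk : 0 < k) (hhf : h ≤ d + f) :
    Nat.card {x : G × G // IsExactBicyclicPair (p ^ d) (p ^ (h + k)) x.1 x.2} =
      ((p ^ d).totient * p ^ d) * (p ^ h * (p ^ (d + k)).totient) := by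
  have := H.normal_zpowers (pow_ne_zero h hp.ne_zero)
  have : Finite G := Nat.finite_of_card_ne_zero <| by
    simp [H.card_eq (pow_ne_zero h hp.ne_zero), hp.ne_zero]
  have hrp : r ≡ 1 [MOD p] := hr.of_dvd (dvd_pow_self p hf)
  obtain ⟨k, rfl⟩ := Nat.exists_eq_add_one.mpr hk
  rw [← H.ncard_orderOf_mk_eq_and_pow_eq_one hp (f := f + k)
    (pow_pow_modEq_one_of_modEq_one hf hr (k + 1)) hdh.le (by omega), ← H.ncard_orderOf_mk_eq,
    ← Set.ncard_prod, ← Nat.card_coe_set_eq]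
  exact Nat.card_congr (Equiv.subtypeEquivRight fun x ↦
    H.isExactBicyclicPair_iff hp hrp hdh hk x.1 x.2)

end IsMetacyclicGenPair

theorem M3rels_add_eq_metacyclicRels (p d h k f : ℕ) :
    M3rels p d (h + k) h f = metacyclicRels (p ^ h) (p ^ (d + k)) (p ^ d) (1 + p ^ f) := by
  rw [M3rels, metacyclicRels, show d + (h + k) - h = d + k by omega]

theorem stmt_10_general (p d e h f : ℕ) (hp : p.Prime) (hd : 0 < d) (hhd : h - d ≤ f)
    (hdh : d < h) (hhe : h < e) :
    Nat.card {x : M3 p d e h f × M3 p d e h f // IsExactBicyclicPair (p ^ d) (p ^ e) x.1 x.2} =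
      p ^ (3 * d + e - 2) * (p - 1) ^ 2 := by
  have hf : f ≠ 0 := by omega
  obtain ⟨k, rfl⟩ := Nat.exists_eq_add_of_le hhe.le
  have hr : 1 + p ^ f ≡ 1 [MOD p ^ f] := by simp [Nat.ModEq]
  have hpow : (1 + p ^ f) ^ p ^ (d + k) ≡ 1 [MOD p ^ h] :=
    (pow_pow_modEq_one_of_modEq_one hf hr (d + k)).of_dvd (pow_dvd_pow p (by omega))
  have hmul : p ^ d * (1 + p ^ f) ≡ p ^ d [MOD p ^ h] := by
    have := (hr.mul_left' (p ^ d)).of_dvd (m := p ^ h) (pow_add p d f ▸ pow_dvd_pow p (by omega))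
    simpa using this
  have H := isMetacyclicGenPair_presentedGroup (pow_ne_zero (d + k) hp.ne_zero) hpow hmul
  rw [← M3rels_add_eq_metacyclicRels] at H
  refine (H.card_isExactBicyclicPair hp hf hr hdh (by omega) (by omega)).trans ?_
  rw [Nat.totient_prime_pow hp hd, Nat.totient_prime_pow hp (by omega)]
  rw [show 3 * d + (h + k) - 2 = (d - 1) + d + (h + (d + k - 1)) by omega]
  ring

/-- For `h - d ≤ f < d < h < e`, the number of exact `(p^d,p^e)`-bicyclic
pairs of `M₃(p,d,e,h,f)` equals `p^(3d+e-2)(p-1)²`. -/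
theorem stmt_10 (p d e h f : ℕ) (hp : p.Prime) (hodd : Odd p)
    (hf : 0 < f) (hhd : h - d ≤ f) (hfd : f < d) (hdh : d < h) (hhe : h < e) :
    Nat.card {x : M3 p d e h f × M3 p d e h f // IsExactBicyclicPair (p ^ d) (p ^ e) x.1 x.2} =
      p ^ (3 * d + e - 2) * (p - 1) ^ 2 :=
  stmt_10_general p d e h f hp (hf.trans hfd) hhd hdh hhe
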